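/- Let ω ∈ {0,1}^{ℕ*} be a configuration with ω_z = 0 for some z > 1, and let f be a bounded measurable function on {0,1}^{ℕ*}. Then for every t ≥ 0: | P_t⁺f(ω) − P_t⁺(μ_{{1}}(f))(ω) | ≤ √2 · ‖f‖_∞ · (1/min(p,q))^z · e^{−t·gap}. (Local relaxation to equilibrium on the left of a zero present in the initial configuration, valid also for f with infinite support.) -/

import Mathlib

open MeasureTheory ProbabilityTheory Filter

noncomputable section

/-! ### The East model on `ℤ` (used only to define the spectral gap) -/

/-- Configurations of the East model on `ℤ`: `false` = empty, `true` = occupied. -/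
abbrev Config : Type := ℤ → Bool

/-- The configuration `ω` flipped at site `x`. -/
def flipAt (ω : Config) (x : ℤ) : Config := fun y => if y = x then !ω x else ω y

/-- `f` depends only on the coordinates in `S`. -/
def DependsOnF (f : Config → ℝ) (S : Set ℤ) : Prop :=
  ∀ ω ω' : Config, (∀ x ∈ S, ω x = ω' x) → f ω = f ω'

/-- A cylinder (local) function on `ℤ`-configurations. -/
def IsCylinder (f : Config → ℝ) : Prop := ∃ S : Finset ℤ, DependsOnF f ↑S

/-- The East generator on `ℤ` at density `p` of ones. -/
def eastGen (p : ℝ) (f : Config → ℝ) (ω : Config) : ℝ :=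
  ∑' x : ℤ, (if ω (x + 1) = false then (1 : ℝ) else 0) *
    (if ω x = false then p else 1 - p) * (f (flipAt ω x) - f ω)

/-- The spectral gap of the East model on `ℤ` at density `p`, with equilibrium measure `μ`. -/
def gapZ (p : ℝ) (μ : Measure Config) : ℝ :=
  sInf {r | ∃ f : Config → ℝ, IsCylinder f ∧ 0 < variance f μ ∧
    r = (-∫ ω, f ω * eastGen p f ω ∂μ) / variance f μ}

/-! ### The East model on `ℕ* = {1, 2, …}` -/

/-- The positive natural numbers `ℕ* = {1, 2, …}`. -/
abbrev PosNat : Type := {n : ℕ // 0 < n}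

/-- Configurations of the East model on `ℕ*`. -/
abbrev ConfigP : Type := PosNat → Bool

/-- The site `1 ∈ ℕ*`. -/
def onePos : PosNat := ⟨1, Nat.one_pos⟩

/-- The right neighbour `x + 1` of a site `x ∈ ℕ*`. -/
def succP (x : PosNat) : PosNat := ⟨x.1 + 1, Nat.succ_pos _⟩

/-- The configuration `ω` flipped at site `x`. -/
def flipAtP (ω : ConfigP) (x : PosNat) : ConfigP := fun y => if y = x then !ω x else ω y

/-- A cylinder (local) function on `ℕ*`-configurations. -/
def IsCylinderP (f : ConfigP → ℝ) : Prop :=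
  ∃ S : Finset PosNat, ∀ ω ω' : ConfigP, (∀ x ∈ S, ω x = ω' x) → f ω = f ω'

/-- The East generator on `ℕ*` at density `p` of ones. -/
def eastGenP (p : ℝ) (f : ConfigP → ℝ) (ω : ConfigP) : ℝ :=
  ∑' x : PosNat, (if ω (succP x) = false then (1 : ℝ) else 0) *
    (if ω x = false then p else 1 - p) * (f (flipAtP ω x) - f ω)

/-- `f` averaged over the coordinate at site `1` w.r.t. Bernoulli(p). -/
def avg1P (p : ℝ) (f : ConfigP → ℝ) (ω : ConfigP) : ℝ :=
  p * f (Function.update ω onePos true) + (1 - p) * f (Function.update ω onePos false)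

/-- The East process on `ℕ*` at density `p`, together with the product Bernoulli(p)
measure on `ℤ`-configurations (used to define the spectral gap on `ℤ`). -/
structure EastPlus where
  /-- equilibrium density of ones -/
  p : ℝ
  hp0 : 0 < p
  hp1 : p < 1
  /-- the Markov semigroup on `ℕ*` -/
  Pp : ℝ → Kernel ConfigP ConfigP
  markov : ∀ t : ℝ, IsMarkovKernel (Pp t)
  P0 : Pp 0 = Kernel.id
  semigroup : ∀ s t : ℝ, 0 ≤ s → 0 ≤ t → Pp (t + s) = (Pp s).comp (Pp t)
  feller : ∀ t : ℝ, 0 ≤ t → ∀ f : ConfigP → ℝ, Continuous f →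
    Continuous fun ω : ConfigP => ∫ η, f η ∂(Pp t ω)
  timeCont : ∀ f : ConfigP → ℝ, Continuous f → ∀ ω : ConfigP,
    Continuous fun t : ℝ => ∫ η, f η ∂(Pp t ω)
  generator : ∀ f : ConfigP → ℝ, IsCylinderP f → ∀ ω : ConfigP,
    HasDerivWithinAt (fun u : ℝ => ∫ η, f η ∂(Pp u ω)) (eastGenP p f ω) (Set.Ici 0) 0
  /-- the product Bernoulli(p) measure on `ℤ`-configurations -/
  μ : Measure Config
  μprob : IsProbabilityMeasure μ
  μprod : ∀ (S : Finset ℤ) (σ : ℤ → Bool),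
    μ {ω : Config | ∀ x ∈ S, ω x = σ x} = ∏ x ∈ S, ENNReal.ofReal (if σ x then p else 1 - p)

/-!
Zeros of the East dynamics only create zeros on their left. Hence from a configuration that is
full beyond site `n + 1` the process never leaves the configurations with this property, and its
semigroup solves the Kolmogorov equation of a finite Markov chain. By the Feller property it
suffices to work with such configurations and let `n → ∞`.

Let `F t = P_t g` with `g` continuous and `μ_{1}(g) = 0`. For a block `{1, …, k}` whose right
neighbour is empty, average `F t` or `(F t) ^ 2` over the block and keep the configuration outside.
Updates inside the block contribute to the time derivative only through the Dirichlet form of the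
block. Updates outside it replace the block average by a combination of averages over other closed
blocks: an update at the empty neighbour `k + 1` requires `k + 2` to be empty and resamples `k + 1`,
which enlarges the block. So at a pair (block, configuration) where the average is maximal they
contribute a nonpositive amount. This maximum principle first preserves the zero mean, and
then, combined with the gap inequality for a block with a zero on its right, makes the average
of `(F t) ^ 2` decay like `exp (-2 * gap * t)`. The Bernoulli weight of a configuration of the
block `{1, …, z - 1}` is at least `min p q ^ (z - 1)`, and this turns the averaged bound
into a pointwise one.

Bounded measurable functions follow from continuous ones by approximation in `L¹` of the two
measures whose integrals are compared.
-/

section CompactSpace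

variable {X : Type*} [TopologicalSpace X] [CompactSpace X] {f : X → ℝ}

theorem exists_abs_le_of_continuous (hf : Continuous f) : ∃ C, ∀ x, |f x| ≤ C := by
  obtain ⟨C, hC⟩ := isCompact_univ.exists_bound_of_continuousOn hf.continuousOn
  exact ⟨C, fun x => hC x (Set.mem_univ x)⟩

theorem integrable_of_continuous [MeasurableSpace X] [OpensMeasurableSpace X] (hf : Continuous f)
    (μ : Measure X) [IsFiniteMeasure μ] : Integrable f μ :=
  hf.integrable_of_hasCompactSupport (HasCompactSupport.of_compactSpace f)

end CompactSpace

theorem hasDerivWithinAt_Ici_nonpos_of_forall_le {φ : ℝ → ℝ} {a d : ℝ}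
    (hd : HasDerivWithinAt φ d (Set.Ici a) a) (h : ∀ s, a ≤ s → φ s ≤ φ a) : d ≤ 0 := by
  have hslope := hd.Ioi_of_Ici
  rw [hasDerivWithinAt_iff_tendsto_slope' (by simp)] at hslope
  refine le_of_tendsto hslope ?_
  filter_upwards [self_mem_nhdsWithin] with s hs
  rw [slope_def_field]
  exact div_nonpos_of_nonpos_of_nonneg (sub_nonpos.2 (h s hs.le)) (sub_pos.2 hs).le

/-! ### Feller semigroups -/

/-- A Markov semigroup on `X` that preserves continuous functions and is pointwise continuous in
time. The kernels at negative times carry no information. -/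
structure FellerSemigroup (X : Type*) [TopologicalSpace X] [MeasurableSpace X] where
  kernel : ℝ → Kernel X X
  isMarkovKernel : ∀ t, IsMarkovKernel (kernel t)
  kernel_zero : kernel 0 = Kernel.id
  kernel_add : ∀ s t, 0 ≤ s → 0 ≤ t → kernel (t + s) = (kernel s).comp (kernel t)
  continuous_integral : ∀ t, 0 ≤ t → ∀ f : X → ℝ, Continuous f →
    Continuous fun x => ∫ y, f y ∂(kernel t x)
  continuous_time : ∀ f : X → ℝ, Continuous f → ∀ x, Continuous fun t => ∫ y, f y ∂(kernel t x)

namespace FellerSemigroup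

attribute [instance] FellerSemigroup.isMarkovKernel

section Operators

variable {X : Type*} [TopologicalSpace X] [MeasurableSpace X] (P : FellerSemigroup X)

/-- The action of the semigroup on functions, `P_t f (x) = ∫ f dP_t(x, ·)`. -/
def op (t : ℝ) (f : X → ℝ) (x : X) : ℝ := ∫ y, f y ∂(P.kernel t x)

/-- The resolvent `R_l f = ∫_0^∞ e^{-l s} P_s f ds`. -/
def resolvent (l : ℝ) (f : X → ℝ) (x : X) : ℝ :=
  ∫ s in Set.Ioi (0 : ℝ), Real.exp (-l * s) * P.op s f x

/-- The generator of the semigroup is defined on `f` at the point `x`, with value `a`. -/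
def HasGeneratorAt (f : X → ℝ) (a : ℝ) (x : X) : Prop :=
  HasDerivWithinAt (fun t => P.op t f x) a (Set.Ici 0) 0

variable {P} {f g k : X → ℝ} {x : X} {t C l : ℝ}

theorem continuous_op (ht : 0 ≤ t) (hf : Continuous f) : Continuous (P.op t f) :=
  P.continuous_integral t ht f hf

theorem continuous_op_time (hf : Continuous f) (x : X) : Continuous fun t => P.op t f x :=
  P.continuous_time f hf x

theorem abs_op_le (hf : ∀ y, |f y| ≤ C) : |P.op t f x| ≤ C := by
  simpa [op] using norm_integral_le_of_norm_le_const (μ := P.kernel t x) (f := f) (ae_of_all _ hf)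

theorem op_nonneg (hf : ∀ y, 0 ≤ f y) : 0 ≤ P.op t f x := integral_nonneg hf

theorem op_const_mul (c : ℝ) : P.op t (fun y => c * f y) x = c * P.op t f x :=
  integral_const_mul _ _

theorem HasGeneratorAt.const_mul {a : ℝ} (h : P.HasGeneratorAt f a x) (c : ℝ) :
    P.HasGeneratorAt (fun y => c * f y) (c * a) x := by
  simpa only [HasGeneratorAt, op_const_mul] using HasDerivWithinAt.const_mul c h

section CompactSpace

variable [CompactSpace X]

theorem integrableOn_exp_mul_op (hl : 0 < l) (hf : Continuous f) (x : X) (a : ℝ) :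
    IntegrableOn (fun s => Real.exp (-l * s) * P.op s f x) (Set.Ioi a) := by
  obtain ⟨C, hC⟩ := exists_abs_le_of_continuous hf
  have hcont := continuous_op_time (P := P) hf x
  refine Integrable.mono' ((exp_neg_integrableOn_Ioi a hl).mul_const C)
    (by fun_prop) (Eventually.of_forall fun s => ?_)
  rw [Real.norm_eq_abs, abs_mul, Real.abs_exp]
  gcongr
  exact abs_op_le hC

theorem continuous_resolvent [FirstCountableTopology X] (hl : 0 < l) (hf : Continuous f) :
    Continuous (P.resolvent l f) := by
  obtain ⟨C, hC⟩ := exists_abs_le_of_continuous hf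
  refine continuous_of_dominated (bound := fun s => Real.exp (-l * s) * C)
    (fun x => (integrableOn_exp_mul_op hl hf x 0).aestronglyMeasurable)
    (fun x => Eventually.of_forall fun s => ?_)
    ((exp_neg_integrableOn_Ioi 0 hl).mul_const C) ?_
  · rw [Real.norm_eq_abs, abs_mul, Real.abs_exp]
    gcongr
    exact abs_op_le hC
  · filter_upwards [ae_restrict_mem measurableSet_Ioi] with s hs
    exact continuous_const.mul (continuous_op hs.le hf)

theorem op_eq_zero_of_resolvent_nonpos (hl : 0 < l) (hf : Continuous f) (hf0 : ∀ y, 0 ≤ f y)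
    (h : P.resolvent l f x ≤ 0) (ht : 0 ≤ t) : P.op t f x = 0 := by
  have hcont := continuous_op_time (P := P) hf x
  have hnonneg : ∀ s, 0 ≤ Real.exp (-l * s) * P.op s f x := fun s =>
    mul_nonneg (Real.exp_pos _).le (op_nonneg hf0)
  have hzero : P.resolvent l f x = 0 := h.antisymm (integral_nonneg hnonneg)
  have hae : (fun s => Real.exp (-l * s) * P.op s f x) =ᵐ[volume.restrict (Set.Ioi 0)] 0 :=
    (integral_eq_zero_iff_of_nonneg hnonneg (integrableOn_exp_mul_op hl hf x 0)).1 hzero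
  have hIoi : Set.EqOn (fun s => Real.exp (-l * s) * P.op s f x) 0 (Set.Ioi 0) :=
    Measure.eqOn_open_of_ae_eq hae isOpen_Ioi (by fun_prop) continuousOn_const
  have hIci := hIoi.closure (by fun_prop) continuous_const
  rw [closure_Ioi] at hIci
  simpa using hIci ht

end CompactSpace

theorem op_zero [OpensMeasurableSpace X] (hf : Continuous f) : P.op 0 f x = f x := by
  rw [op, P.kernel_zero, Kernel.id_apply]
  exact integral_dirac' f x hf.measurable.stronglyMeasurable

variable [CompactSpace X] [OpensMeasurableSpace X]

theorem op_add {s : ℝ} (hs : 0 ≤ s) (ht : 0 ≤ t) (hf : Continuous f) :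
    P.op (t + s) f x = P.op t (P.op s f) x := by
  rw [op, P.kernel_add s t hs ht]
  rw [Kernel.integral_comp (integrable_of_continuous hf _)]
  rfl

theorem op_sub (hf : Continuous f) (hg : Continuous g) :
    P.op t (fun y => f y - g y) x = P.op t f x - P.op t g x :=
  integral_sub (integrable_of_continuous hf _) (integrable_of_continuous hg _)

theorem HasGeneratorAt.sub {a b : ℝ} (hf : Continuous f) (hg : Continuous g)
    (ha : P.HasGeneratorAt f a x) (hb : P.HasGeneratorAt g b x) :
    P.HasGeneratorAt (fun y => f y - g y) (a - b) x := by
  simp only [HasGeneratorAt, op_sub hf hg]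
  exact HasDerivWithinAt.sub ha hb

theorem HasGeneratorAt.nonpos_of_forall_le {a : ℝ} (hf : Continuous f)
    (h : P.HasGeneratorAt f a x) (hmax : ∀ y, f y ≤ f x) : a ≤ 0 := by
  refine hasDerivWithinAt_Ici_nonpos_of_forall_le h fun s _ => ?_
  rw [op_zero hf, op]
  calc ∫ y, f y ∂(P.kernel s x) ≤ ∫ _, f x ∂(P.kernel s x) :=
        integral_mono (integrable_of_continuous hf _) (integrable_const _) hmax
    _ = f x := by simp

theorem HasGeneratorAt.hasDerivWithinAt_op {a : ℝ} (hf : Continuous f) (ht : 0 ≤ t)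
    (h : P.HasGeneratorAt (P.op t f) a x) :
    HasDerivWithinAt (fun u => P.op u f x) a (Set.Ici t) t := by
  have hshift : HasDerivWithinAt (fun u => P.op (u - t) (P.op t f) x) a (Set.Ici t) t := by
    have hsub : HasDerivWithinAt (fun u => u - t) 1 (Set.Ici t) t :=
      ((hasDerivAt_id t).sub_const t).hasDerivWithinAt
    have h' : HasDerivWithinAt (fun u => P.op u (P.op t f) x) a (Set.Ici 0) (t - t) := by
      rwa [sub_self]
    simpa [Function.comp_def] using
      HasDerivWithinAt.comp (h := fun u => u - t) t h' hsub fun u (hu : t ≤ u) =>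
        Set.mem_Ici.2 (sub_nonneg.2 hu)
  have hop : ∀ u ∈ Set.Ici t, P.op u f x = P.op (u - t) (P.op t f) x := fun u hu => by
    rw [← op_add ht (sub_nonneg.2 hu) hf, sub_add_cancel]
  exact hshift.congr hop (hop t Set.self_mem_Ici)

theorem op_resolvent_eq_integral (hl : 0 < l) (hf : Continuous f) (ht : 0 ≤ t) :
    P.op t (P.resolvent l f) x = ∫ s in Set.Ioi (0 : ℝ), Real.exp (-l * s) * P.op (s + t) f x := by
  obtain ⟨C, hC⟩ := exists_abs_le_of_continuous hf
  have hmeas : StronglyMeasurable (Function.uncurry fun (s : ℝ) y =>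
      Real.exp (-l * s) * P.op s f y) := by
    refine stronglyMeasurable_uncurry_of_continuous_of_stronglyMeasurable
      (fun y => ?_) (fun s => ?_)
    · have := continuous_op_time (P := P) hf y
      fun_prop
    · exact (StronglyMeasurable.integral_kernel hf.measurable.stronglyMeasurable).const_mul _
  have hint : Integrable (Function.uncurry fun (s : ℝ) y => Real.exp (-l * s) * P.op s f y)
      ((volume.restrict (Set.Ioi (0 : ℝ))).prod (P.kernel t x)) := by
    refine Integrable.mono' (Integrable.mul_prod (exp_neg_integrableOn_Ioi 0 hl)
      (integrable_const C)) hmeas.aestronglyMeasurable (Eventually.of_forall fun q => ?_)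
    rw [Function.uncurry, Real.norm_eq_abs, abs_mul, Real.abs_exp]
    gcongr
    exact abs_op_le hC
  calc P.op t (P.resolvent l f) x
      = ∫ s in Set.Ioi (0 : ℝ), ∫ y, Real.exp (-l * s) * P.op s f y ∂(P.kernel t x) :=
        (integral_integral_swap hint).symm
    _ = _ := setIntegral_congr_fun measurableSet_Ioi fun s hs => by
        rw [integral_const_mul, add_comm s t, op_add hs.le ht hf]
        rfl

theorem op_resolvent (hl : 0 < l) (hf : Continuous f) (ht : 0 ≤ t) :
    P.op t (P.resolvent l f) x =
      Real.exp (l * t) *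
        (P.resolvent l f x - ∫ s in (0 : ℝ)..t, Real.exp (-l * s) * P.op s f x) := by
  set φ : ℝ → ℝ := fun s => Real.exp (-l * s) * P.op s f x
  have hshift : ∫ s in Set.Ioi (0 : ℝ), φ (s + t) = ∫ s in Set.Ioi t, φ s := by
    simpa using (measurePreserving_add_right volume t).setIntegral_preimage_emb
      (measurableEmbedding_addRight t) φ (Set.Ioi t)
  have hsplit := intervalIntegral.integral_interval_add_Ioi
    (integrableOn_exp_mul_op (P := P) hl hf x 0) (integrableOn_exp_mul_op hl hf x t)
  calc P.op t (P.resolvent l f) x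
      = ∫ s in Set.Ioi (0 : ℝ), Real.exp (l * t) * φ (s + t) := by
        rw [op_resolvent_eq_integral hl hf ht]
        refine integral_congr_ae (Eventually.of_forall fun s => ?_)
        simp only [φ]
        rw [← mul_assoc, ← Real.exp_add]
        ring_nf
    _ = _ := by rw [integral_const_mul, hshift, resolvent, ← hsplit, add_sub_cancel_left]

theorem hasGeneratorAt_resolvent (hl : 0 < l) (hf : Continuous f) (x : X) :
    P.HasGeneratorAt (P.resolvent l f) (l * P.resolvent l f x - f x) x := by
  have hcont : Continuous fun s => Real.exp (-l * s) * P.op s f x :=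
    (by fun_prop : Continuous fun s => Real.exp (-l * s)).mul (continuous_op_time hf x)
  have hint := intervalIntegral.integral_hasDerivAt_right (hcont.intervalIntegrable 0 0)
    hcont.aestronglyMeasurable.stronglyMeasurableAtFilter hcont.continuousAt
  have hexp : HasDerivAt (fun t => Real.exp (l * t)) l 0 := by
    simpa using ((hasDerivAt_id (0 : ℝ)).const_mul l).exp
  have h := hexp.mul (hint.const_sub (P.resolvent l f x))
  simp only [mul_zero, Real.exp_zero, intervalIntegral.integral_same, sub_zero, one_mul,
    op_zero hf, mul_neg, ← sub_eq_add_neg] at h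
  exact h.hasDerivWithinAt.congr (fun t ht => op_resolvent hl hf ht) (op_resolvent hl hf le_rfl)

variable [FirstCountableTopology X]

theorem mul_resolvent_le_of_forall_le (hl : 0 < l) (hf : Continuous f) (hC : ∀ y, f y ≤ C) (x : X) :
    l * P.resolvent l f x ≤ C := by
  have hcRf := continuous_resolvent (P := P) hl hf
  obtain ⟨y, -, hy⟩ := isCompact_univ.exists_isMaxOn ⟨x, Set.mem_univ x⟩ hcRf.continuousOn
  have hnonpos := (hasGeneratorAt_resolvent hl hf y).nonpos_of_forall_le hcRf
    fun v => hy (Set.mem_univ v)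
  have : P.resolvent l f x ≤ P.resolvent l f y := hy (Set.mem_univ x)
  nlinarith [hC y]

theorem mul_resolvent_le_add (hl : 0 < l) (hf : Continuous f) (hk : Continuous k) {Lf : X → ℝ}
    (hgen : ∀ y, P.HasGeneratorAt f (Lf y) y) (hle : ∀ y, Lf y ≤ k y) (x : X) :
    l * P.resolvent l f x ≤ f x + P.resolvent l k x := by
  have hcRf := continuous_resolvent (P := P) hl hf
  have hcRk := continuous_resolvent (P := P) hl hk
  set w : X → ℝ := fun y => l * P.resolvent l f y - f y - P.resolvent l k y with hw
  obtain ⟨y, -, hy⟩ := isCompact_univ.exists_isMaxOn ⟨x, Set.mem_univ x⟩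
    (by fun_prop : Continuous w).continuousOn
  have hgen_w : P.HasGeneratorAt w
      (l * (l * P.resolvent l f y - f y) - Lf y - (l * P.resolvent l k y - k y)) y :=
    (((hasGeneratorAt_resolvent hl hf y).const_mul l).sub (by fun_prop) hf (hgen y)).sub
      (by fun_prop) hcRk (hasGeneratorAt_resolvent hl hk y)
  have hnonpos := hgen_w.nonpos_of_forall_le (by fun_prop) fun v => hy (Set.mem_univ v)
  have hwy : w y ≤ 0 := by
    refine nonpos_of_mul_nonpos_right ?_ hl
    simp only [hw]
    linarith [hle y]
  have : w x ≤ w y := hy (Set.mem_univ x)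
  simp only [hw] at this hwy
  linarith

end Operators

end FellerSemigroup

/-! ### Starting from a configuration that is full far to the right -/

theorem continuous_of_dependsOn_finset {ι α β : Type*} [TopologicalSpace α] [DiscreteTopology α]
    [TopologicalSpace β] {f : (ι → α) → β} {S : Finset ι} (hf : DependsOn f S) :
    Continuous f :=
  IsLocallyConstant.continuous <| (IsLocallyConstant.iff_exists_open f).2 fun x =>
    ⟨(S : Set ι).pi fun i => {x i}, isOpen_set_pi S.finite_toSet fun _ _ => isOpen_discrete _,
      fun _ _ => rfl, fun _ hy => hf hy⟩

theorem IsCylinder.continuous {f : Config → ℝ} (hf : IsCylinder f) : Continuous f :=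
  hf.elim fun _ hS => continuous_of_dependsOn_finset fun ω ω' => hS ω ω'

theorem IsCylinderP.continuous {f : ConfigP → ℝ} (hf : IsCylinderP f) : Continuous f :=
  hf.elim fun _ hS => continuous_of_dependsOn_finset fun η η' => hS η η'

theorem flipAtP_eq_update (η : ConfigP) (x : PosNat) :
    flipAtP η x = Function.update η x (!η x) := by
  ext y
  simp [flipAtP, Function.update_apply]

/-- The sites of `ℕ*` indexed from `0`, so that `site 0` is the site `1`. -/
def site (i : ℕ) : PosNat := ⟨i + 1, i.succ_pos⟩

theorem site_injective : Function.Injective site := fun i j h => by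
  simpa [site] using congrArg Subtype.val h

@[simp]
theorem site_inj {i j : ℕ} : site i = site j ↔ i = j := site_injective.eq_iff

theorem exists_site_eq (x : PosNat) : ∃ i, site i = x :=
  ⟨x.1 - 1, Subtype.ext (Nat.sub_add_cancel x.2)⟩

/-- The flip rate of the East dynamics at `site i`. -/
def rate (p : ℝ) (i : ℕ) (η : ConfigP) : ℝ :=
  (if η (site (i + 1)) = false then 1 else 0) * (if η (site i) = false then p else 1 - p)

/-- The part of the East generator that updates `site i`. -/
def siteGen (p : ℝ) (i : ℕ) (f : ConfigP → ℝ) (η : ConfigP) : ℝ :=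
  rate p i η * (f (flipAtP η (site i)) - f η)

theorem eastGenP_eq_sum {p : ℝ} {f : ConfigP → ℝ} {η : ConfigP} {S : Finset ℕ}
    (h : ∀ i ∉ S, siteGen p i f η = 0) : eastGenP p f η = ∑ i ∈ S, siteGen p i f η :=
  (Equiv.tsum_eq Equiv.pnatEquivNat.symm _).symm.trans (tsum_eq_sum h)

/-- Keep the configuration on `site 0, …, site n` and fill all the other sites. -/
def freeze (n : ℕ) (η : ConfigP) : ConfigP := fun x => if x.1 ≤ n + 1 then η x else true

section Freeze

variable {n i : ℕ} {η : ConfigP}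

theorem freeze_site (n i : ℕ) (η : ConfigP) :
    freeze n η (site i) = if i ≤ n then η (site i) else true := by
  simp [freeze, site]

theorem freeze_eq_self_iff : freeze n η = η ↔ ∀ i, n < i → η (site i) = true := by
  refine ⟨fun h i hi => ?_, fun h => funext fun x => ?_⟩
  · rw [← h, freeze_site, if_neg hi.not_ge]
  · obtain ⟨i, rfl⟩ := exists_site_eq x
    rw [freeze_site]
    split_ifs with hi
    · rfl
    · exact (h i (not_le.1 hi)).symm

@[simp]
theorem freeze_freeze (n : ℕ) (η : ConfigP) : freeze n (freeze n η) = freeze n η :=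
  freeze_eq_self_iff.2 fun i hi => by rw [freeze_site, if_neg hi.not_ge]

theorem freeze_update (hi : i ≤ n) (η : ConfigP) (b : Bool) :
    freeze n (Function.update η (site i) b) = Function.update (freeze n η) (site i) b := by
  ext x
  obtain ⟨j, rfl⟩ := exists_site_eq x
  by_cases hj : j = i <;> simp [freeze_site, hj, hi]

theorem finite_range_freeze (n : ℕ) : (Set.range (freeze n)).Finite := by
  refine Set.Finite.of_finite_image (f := fun ξ (i : Fin (n + 1)) => ξ (site i)) (Set.toFinite _) ?_
  rintro _ ⟨η, rfl⟩ _ ⟨η', rfl⟩ h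
  ext x
  obtain ⟨i, rfl⟩ := exists_site_eq x
  by_cases hi : i ≤ n
  · exact congrFun h ⟨i, Nat.lt_succ_of_le hi⟩
  · simp [freeze_site, hi]

theorem tendsto_freeze (η : ConfigP) : Tendsto (fun n => freeze n η) atTop (nhds η) := by
  refine tendsto_pi_nhds.2 fun x => tendsto_const_nhds.congr' ?_
  filter_upwards [eventually_ge_atTop x.1] with n hn
  rw [freeze, if_pos (hn.trans n.le_succ)]

theorem siteGen_comp_freeze (hi : i < n) (p : ℝ) (f : ConfigP → ℝ) (η : ConfigP) :
    siteGen p i (fun ξ => f (freeze n ξ)) (freeze n η) =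
      siteGen p i (fun ξ => f (freeze n ξ)) η := by
  have hrate : rate p i (freeze n η) = rate p i η := by
    simp [rate, freeze_site, hi.le, Nat.succ_le_of_lt hi]
  simp [siteGen, hrate, flipAtP_eq_update, freeze_update hi.le, freeze_site, hi.le]

end Freeze

namespace EastPlus

variable (E : EastPlus) {n : ℕ} {t : ℝ}

/-- The East semigroup on `ℕ*`, as a Feller semigroup. -/
def fellerSemigroup : FellerSemigroup ConfigP where
  kernel := E.Pp
  isMarkovKernel := E.markov
  kernel_zero := E.P0
  kernel_add := E.semigroup
  continuous_integral := E.feller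
  continuous_time := E.timeCont

/-- The indicator function of a zero at `site j`. -/
def zeroAt (j : ℕ) (η : ConfigP) : ℝ := if η (site j) = false then 1 else 0

theorem isCylinderP_zeroAt (j : ℕ) : IsCylinderP (zeroAt j) :=
  ⟨{site j}, fun η η' h => by simp [zeroAt, h (site j) (Finset.mem_singleton_self _)]⟩

theorem zeroAt_nonneg (j : ℕ) (η : ConfigP) : 0 ≤ zeroAt j η := by
  rw [zeroAt]
  split_ifs <;> norm_num

theorem zeroAt_le_one (j : ℕ) (η : ConfigP) : zeroAt j η ≤ 1 := by
  rw [zeroAt]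
  split_ifs <;> norm_num

theorem eastGenP_zeroAt_le {p : ℝ} (hp0 : 0 ≤ p) (j : ℕ) (η : ConfigP) :
    eastGenP p (zeroAt j) η ≤ zeroAt (j + 1) η := by
  have hlocal : ∀ i ∉ ({j} : Finset ℕ), siteGen p i (zeroAt j) η = 0 := fun i hi => by
    have : j ≠ i := fun h => hi (by simp [h])
    simp [siteGen, zeroAt, flipAtP_eq_update, this]
  calc eastGenP p (zeroAt j) η = siteGen p j (zeroAt j) η := by
        rw [eastGenP_eq_sum hlocal, Finset.sum_singleton]
    _ = zeroAt (j + 1) η * (if η (site j) = false then -p else 1 - p) := by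
        cases hj : η (site j) <;> simp [siteGen, rate, zeroAt, flipAtP_eq_update, hj]
    _ ≤ zeroAt (j + 1) η * 1 := by
        refine mul_le_mul_of_nonneg_left ?_ (zeroAt_nonneg _ _)
        split_ifs <;> linarith
    _ = zeroAt (j + 1) η := mul_one _

/- `eastGenP_zeroAt_le` and `mul_resolvent_le_add` give
`2 * R_2 (zeroAt j) ≤ zeroAt j + R_2 (zeroAt (j + 1))`, so each step to the right gains a factor
`1 / 2` where `zeroAt j` vanishes. -/
theorem resolvent_zeroAt_nonpos {σ : ConfigP} (hσ : freeze n σ = σ) {j : ℕ} (hj : n < j) :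
    E.fellerSemigroup.resolvent 2 (zeroAt j) σ ≤ 0 := by
  have hcont j := (isCylinderP_zeroAt j).continuous
  have hhalf : ∀ m : ℕ, ∀ j, n < j →
      E.fellerSemigroup.resolvent 2 (zeroAt j) σ ≤ (1 / 2) ^ m := by
    intro m
    induction m with
    | zero =>
      intro j _
      linarith [FellerSemigroup.mul_resolvent_le_of_forall_le (P := E.fellerSemigroup) two_pos
        (hcont j) (zeroAt_le_one j) σ]
    | succ m ih =>
      intro j hj
      have hzero : zeroAt j σ = 0 := by simp [zeroAt, freeze_eq_self_iff.1 hσ j hj]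
      have hcomp := FellerSemigroup.mul_resolvent_le_add (P := E.fellerSemigroup) two_pos
        (hcont j) (hcont (j + 1)) (E.generator _ (isCylinderP_zeroAt j))
        (eastGenP_zeroAt_le E.hp0.le j) σ
      rw [pow_succ]
      linarith [ih (j + 1) (hj.trans j.lt_succ_self)]
  exact ge_of_tendsto' (tendsto_pow_atTop_nhds_zero_of_lt_one (by norm_num) (by norm_num))
    fun m => hhalf m j hj

theorem ae_freeze_eq_self {σ : ConfigP} (hσ : freeze n σ = σ) (ht : 0 ≤ t) :
    ∀ᵐ ξ ∂(E.Pp t σ), freeze n ξ = ξ := by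
  have : IsMarkovKernel (E.Pp t) := E.markov t
  simp only [freeze_eq_self_iff, ae_all_iff]
  intro j hj
  have hcont := (isCylinderP_zeroAt j).continuous
  have hint : ∫ ξ, zeroAt j ξ ∂(E.Pp t σ) = 0 :=
    FellerSemigroup.op_eq_zero_of_resolvent_nonpos (P := E.fellerSemigroup) two_pos hcont
      (zeroAt_nonneg j) (E.resolvent_zeroAt_nonpos hσ hj) ht
  rw [integral_eq_zero_iff_of_nonneg (zeroAt_nonneg j) (integrable_of_continuous hcont _)] at hint
  filter_upwards [hint] with ξ hξ
  simpa [zeroAt] using hξ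

theorem hasDerivWithinAt_integral_freeze {f : ConfigP → ℝ} (hf : Continuous f) (ht : 0 ≤ t)
    (η : ConfigP) :
    HasDerivWithinAt (fun u => ∫ ξ, f ξ ∂(E.Pp u (freeze n η)))
      (∑ i ∈ Finset.range n, siteGen E.p i (fun ζ => ∫ ξ, f ξ ∂(E.Pp t (freeze n ζ))) η)
      (Set.Ici t) t := by
  set F : ConfigP → ℝ := fun ζ => ∫ ξ, f ξ ∂(E.Pp t (freeze n ζ))
  have hcyl : IsCylinderP F := by
    refine ⟨(Finset.range (n + 1)).image site, fun ζ ζ' h => ?_⟩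
    have : freeze n ζ = freeze n ζ' := funext fun x => by
      obtain ⟨i, rfl⟩ := exists_site_eq x
      simp only [freeze_site]
      split_ifs with hi
      · exact h _ (Finset.mem_image_of_mem _ (Finset.mem_range_succ_iff.2 hi))
      · rfl
    simp only [F, this]
  have hgen : eastGenP E.p F (freeze n η) = ∑ i ∈ Finset.range n, siteGen E.p i F η := by
    rw [eastGenP_eq_sum (S := Finset.range n) fun i hi => ?_]
    · exact Finset.sum_congr rfl fun i hi =>
        siteGen_comp_freeze (Finset.mem_range.1 hi) E.p (fun ζ => ∫ ξ, f ξ ∂(E.Pp t ζ)) η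
    · have : ¬i + 1 ≤ n := fun h => hi (Finset.mem_range.2 h)
      simp [siteGen, rate, freeze_site, this]
  refine FellerSemigroup.HasGeneratorAt.hasDerivWithinAt_op (P := E.fellerSemigroup) hf ht ?_
  rw [← hgen]
  have hF : ∀ s ∈ Set.Ici (0 : ℝ), E.fellerSemigroup.op s (E.fellerSemigroup.op t f) (freeze n η) =
      ∫ ξ, F ξ ∂(E.Pp s (freeze n η)) := fun s hs => integral_congr_ae <| by
    filter_upwards [E.ae_freeze_eq_self (freeze_freeze n η) hs] with ξ hξ
    simp only [F, hξ]
    rfl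
  exact (E.generator F hcyl (freeze n η)).congr hF (hF 0 Set.self_mem_Ici)

end EastPlus

/-! ### Block averages -/

/-- The average of `f` over the coordinate `x` with respect to Bernoulli(`p`). -/
def siteAvg (p : ℝ) (x : PosNat) : (ConfigP → ℝ) →ₗ[ℝ] (ConfigP → ℝ) where
  toFun f η := p * f (Function.update η x true) + (1 - p) * f (Function.update η x false)
  map_add' f g := by ext; simp only [Pi.add_apply]; ring
  map_smul' c f := by ext; simp only [Pi.smul_apply, smul_eq_mul, RingHom.id_apply]; ring

/-- The average over the coordinates `site 0, …, site (k - 1)` with respect to the product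
Bernoulli(`p`) measure, the other coordinates being fixed. -/
def blockAvg (p : ℝ) : ℕ → (ConfigP → ℝ) →ₗ[ℝ] (ConfigP → ℝ)
  | 0 => LinearMap.id
  | k + 1 => siteAvg p (site k) ∘ₗ blockAvg p k

/-- The carré du champ of the update at `site i`. -/
def siteEnergy (p : ℝ) (i : ℕ) (f : ConfigP → ℝ) (η : ConfigP) : ℝ :=
  rate p i η * (f (flipAtP η (site i)) - f η) ^ 2

section BlockAvg

variable {p : ℝ} {k i : ℕ} {f g : ConfigP → ℝ} {η : ConfigP}

theorem siteAvg_apply (p : ℝ) (x : PosNat) (f : ConfigP → ℝ) (η : ConfigP) :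
    siteAvg p x f η =
      p * f (Function.update η x true) + (1 - p) * f (Function.update η x false) := rfl

theorem blockAvg_zero (p : ℝ) (f : ConfigP → ℝ) : blockAvg p 0 f = f := rfl

theorem blockAvg_succ (p : ℝ) (k : ℕ) (f : ConfigP → ℝ) :
    blockAvg p (k + 1) f = siteAvg p (site k) (blockAvg p k f) := rfl

theorem blockAvg_one (p : ℝ) (f : ConfigP → ℝ) : blockAvg p 1 f = avg1P p f := rfl

theorem blockAvg_eq_zero_of_le {j : ℕ} (hjk : j ≤ k) (h : blockAvg p j f = 0) :
    blockAvg p k f = 0 := by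
  induction k, hjk using Nat.le_induction with
  | base => exact h
  | succ k _ ih => rw [blockAvg_succ, ih, map_zero]

theorem blockAvg_le_blockAvg (hp0 : 0 ≤ p) (hp1 : p ≤ 1)
    (h : ∀ ξ, (∀ i, k ≤ i → ξ (site i) = η (site i)) → f ξ ≤ g ξ) :
    blockAvg p k f η ≤ blockAvg p k g η := by
  induction k generalizing η with
  | zero => exact h η fun _ _ => rfl
  | succ k ih =>
    have hupdate : ∀ b, blockAvg p k f (Function.update η (site k) b) ≤
        blockAvg p k g (Function.update η (site k) b) := fun b => ih fun ξ hξ => h ξ fun i hi => by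
      rw [hξ i (by omega), Function.update_of_ne (by simp; omega)]
    simp only [blockAvg_succ, siteAvg_apply]
    have := sub_nonneg.2 hp1
    gcongr <;> exact hupdate _

theorem blockAvg_nonneg (hp0 : 0 ≤ p) (hp1 : p ≤ 1) (h : ∀ ξ, 0 ≤ f ξ) : 0 ≤ blockAvg p k f η := by
  simpa using blockAvg_le_blockAvg (f := 0) hp0 hp1 fun ξ _ => h ξ

theorem blockAvg_le_of_forall_le (hp0 : 0 ≤ p) (hp1 : p ≤ 1) {C : ℝ} (h : ∀ ξ, f ξ ≤ C) (k : ℕ)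
    (η : ConfigP) : blockAvg p k f η ≤ C := by
  induction k generalizing η with
  | zero => exact h η
  | succ k ih =>
    calc blockAvg p (k + 1) f η ≤ p * C + (1 - p) * C :=
          add_le_add (mul_le_mul_of_nonneg_left (ih _) hp0)
            (mul_le_mul_of_nonneg_left (ih _) (sub_nonneg.2 hp1))
      _ = C := by ring

theorem blockAvg_congr (h : ∀ ξ, (∀ i, k ≤ i → ξ (site i) = η (site i)) → f ξ = g ξ) :
    blockAvg p k f η = blockAvg p k g η := by
  induction k generalizing η with
  | zero => exact h η fun _ _ => rfl
  | succ k ih =>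
    have hupdate : ∀ b, blockAvg p k f (Function.update η (site k) b) =
        blockAvg p k g (Function.update η (site k) b) := fun b => ih fun ξ hξ => h ξ fun i hi => by
      rw [hξ i (by omega), Function.update_of_ne (by simp; omega)]
    simp only [blockAvg_succ, siteAvg_apply, hupdate]

theorem blockAvg_comp_update (hi : k ≤ i) (f : ConfigP → ℝ) (b : Bool) (η : ConfigP) :
    blockAvg p k (fun ξ => f (Function.update ξ (site i) b)) η =
      blockAvg p k f (Function.update η (site i) b) := by
  induction k generalizing η with
  | zero => rfl
  | succ k ih =>
    have hne : site k ≠ site i := by simp; omega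
    simp only [blockAvg_succ, siteAvg_apply, ih (by omega), Function.update_comm hne]

theorem blockAvg_siteGen_of_le (hi : k ≤ i) (f : ConfigP → ℝ) (η : ConfigP) :
    blockAvg p k (siteGen p i f) η = siteGen p i (blockAvg p k f) η := by
  calc blockAvg p k (siteGen p i f) η
      = blockAvg p k (rate p i η •
          ((fun ξ => f (Function.update ξ (site i) (!η (site i)))) - f)) η :=
        blockAvg_congr fun ξ hξ => by
          simp [siteGen, rate, flipAtP_eq_update, hξ i hi, hξ (i + 1) (by omega)]
    _ = siteGen p i (blockAvg p k f) η := by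
        simp only [map_smul, map_sub, Pi.smul_apply, Pi.sub_apply, smul_eq_mul,
          blockAvg_comp_update hi, siteGen, flipAtP_eq_update]

theorem siteAvg_siteGen (p : ℝ) (i : ℕ) (f : ConfigP → ℝ) :
    siteAvg p (site i) (siteGen p i f) = 0 := by
  ext η
  have hne : site (i + 1) ≠ site i := by simp
  simp only [siteAvg_apply, siteGen, rate, flipAtP_eq_update, Function.update_of_ne hne,
    Function.update_self, Function.update_idem, Bool.true_eq_false, Bool.not_true, Bool.not_false,
    if_true, if_false, Pi.zero_apply]
  ring

theorem blockAvg_siteGen_of_lt (hi : i < k) (f : ConfigP → ℝ) :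
    blockAvg p k (siteGen p i f) = 0 := by
  refine blockAvg_eq_zero_of_le (Nat.succ_le_of_lt hi) ?_
  have : blockAvg p i (siteGen p i f) = siteGen p i (blockAvg p i f) :=
    funext (blockAvg_siteGen_of_le le_rfl f)
  rw [blockAvg_succ, this, siteAvg_siteGen]

theorem rate_nonneg (hp0 : 0 ≤ p) (hp1 : p ≤ 1) (i : ℕ) (η : ConfigP) : 0 ≤ rate p i η := by
  have := sub_nonneg.2 hp1
  unfold rate
  positivity

theorem siteEnergy_nonneg (hp0 : 0 ≤ p) (hp1 : p ≤ 1) (i : ℕ) (f : ConfigP → ℝ) (η : ConfigP) :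
    0 ≤ siteEnergy p i f η :=
  mul_nonneg (rate_nonneg hp0 hp1 i η) (sq_nonneg _)

theorem two_smul_mul_siteGen (p : ℝ) (i : ℕ) (f : ConfigP → ℝ) :
    (2 : ℝ) • (f * siteGen p i f) = siteGen p i (f ^ 2) - siteEnergy p i f := by
  ext η
  simp only [siteGen, siteEnergy, Pi.smul_apply, Pi.sub_apply, Pi.mul_apply, Pi.pow_apply,
    smul_eq_mul]
  ring

theorem two_mul_blockAvg_mul_siteGen_of_lt (hi : i < k) (f : ConfigP → ℝ) (η : ConfigP) :
    2 * blockAvg p k (f * siteGen p i f) η = -blockAvg p k (siteEnergy p i f) η := by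
  have h := congrFun (congrArg (blockAvg p k) (two_smul_mul_siteGen p i f)) η
  simpa [blockAvg_siteGen_of_lt hi] using h

theorem two_mul_blockAvg_mul_siteGen_le (hp0 : 0 ≤ p) (hp1 : p ≤ 1) (hi : k ≤ i)
    (f : ConfigP → ℝ) (η : ConfigP) :
    2 * blockAvg p k (f * siteGen p i f) η ≤ siteGen p i (blockAvg p k (f ^ 2)) η := by
  have h := congrFun (congrArg (blockAvg p k) (two_smul_mul_siteGen p i f)) η
  simp only [map_smul, map_sub, Pi.smul_apply, Pi.sub_apply, smul_eq_mul,
    blockAvg_siteGen_of_le hi] at h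
  linarith [blockAvg_nonneg (k := k) (η := η) hp0 hp1 (siteEnergy_nonneg hp0 hp1 i f)]

theorem min_pow_mul_le_blockAvg (hp0 : 0 ≤ p) (hp1 : p ≤ 1) (hf : ∀ ξ, 0 ≤ f ξ) (k : ℕ)
    (η : ConfigP) : min p (1 - p) ^ k * f η ≤ blockAvg p k f η := by
  have : 0 ≤ min p (1 - p) := le_min hp0 (sub_nonneg.2 hp1)
  induction k generalizing η with
  | zero => simp [blockAvg_zero]
  | succ k ih =>
    have hself : min p (1 - p) ^ k * f η ≤
        blockAvg p k f (Function.update η (site k) (η (site k))) := by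
      rw [Function.update_eq_self]
      exact ih η
    have hnonneg b : 0 ≤ blockAvg p k f (Function.update η (site k) b) :=
      blockAvg_nonneg hp0 hp1 hf
    have hleft b := mul_le_mul_of_nonneg_right (min_le_left p (1 - p)) (hnonneg b)
    have hright b := mul_le_mul_of_nonneg_right (min_le_right p (1 - p)) (hnonneg b)
    calc min p (1 - p) ^ (k + 1) * f η
        ≤ min p (1 - p) * blockAvg p k f (Function.update η (site k) (η (site k))) := by
          rw [pow_succ', mul_assoc]
          gcongr
      _ ≤ blockAvg p (k + 1) f η := by
          rw [blockAvg_succ, siteAvg_apply]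
          have htrue := mul_nonneg hp0 (hnonneg true)
          have hfalse := mul_nonneg (sub_nonneg.2 hp1) (hnonneg false)
          cases η (site k)
          · linarith [hright false]
          · linarith [hleft true]

theorem continuousOn_blockAvg {F : ℝ → ConfigP → ℝ} {s : Set ℝ}
    (hF : ∀ ξ, ContinuousOn (fun t => F t ξ) s) (k : ℕ) (η : ConfigP) :
    ContinuousOn (fun t => blockAvg p k (F t) η) s := by
  induction k generalizing η with
  | zero => exact hF η
  | succ k ih => exact ((ih _).const_mul p).add ((ih _).const_mul (1 - p))

theorem hasDerivWithinAt_blockAvg {F : ℝ → ConfigP → ℝ} {F' : ConfigP → ℝ} {s : Set ℝ} {t : ℝ}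
    (hF : ∀ ξ, HasDerivWithinAt (fun t => F t ξ) (F' ξ) s t) (k : ℕ) (η : ConfigP) :
    HasDerivWithinAt (fun t => blockAvg p k (F t) η) (blockAvg p k F' η) s t := by
  induction k generalizing η with
  | zero => exact hF η
  | succ k ih => exact ((ih _).const_mul p).add ((ih _).const_mul (1 - p))

end BlockAvg

/-- The configuration equal to `ω` on `site 0, …, site (k - 1)` and to `η` elsewhere. -/
def glue (k : ℕ) (ω : Config) (η : ConfigP) : ConfigP := fun x => if x.1 ≤ k then ω x.1 else η x

section Glue

variable {k : ℕ} {ω : Config} {η : ConfigP}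

theorem glue_site (k i : ℕ) (ω : Config) (η : ConfigP) :
    glue k ω η (site i) = if i < k then ω (i + 1) else η (site i) := by
  simp [glue, site]

theorem glue_zero (ω : Config) (η : ConfigP) : glue 0 ω η = η := by
  ext x
  obtain ⟨i, rfl⟩ := exists_site_eq x
  simp [glue_site]

theorem glue_succ (k : ℕ) (ω : Config) (η : ConfigP) :
    glue (k + 1) ω η = glue k ω (Function.update η (site k) (ω (k + 1))) := by
  ext x
  obtain ⟨i, rfl⟩ := exists_site_eq x
  rcases lt_trichotomy i k with h | rfl | h
  · simp [glue_site, h, h.trans k.lt_succ_self]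
  · simp [glue_site]
  · simp [glue_site, h.not_gt, h.ne', (Nat.succ_le_of_lt h).not_gt]

theorem update_glue_succ (k : ℕ) (ω : Config) (η : ConfigP) :
    Function.update (glue (k + 1) ω η) (site k) (η (site k)) = glue k ω η := by
  rw [glue_succ]
  ext x
  obtain ⟨i, rfl⟩ := exists_site_eq x
  by_cases hi : i = k <;> simp [glue_site, hi]

theorem isCylinder_comp_glue (f : ConfigP → ℝ) (k : ℕ) (η : ConfigP) :
    IsCylinder fun ω => f (glue k ω η) := by
  refine ⟨Finset.Icc 1 k, fun ω ω' h => ?_⟩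
  have : glue k ω η = glue k ω' η := by
    ext x
    obtain ⟨i, rfl⟩ := exists_site_eq x
    simp only [glue_site]
    split_ifs with hi
    · rw [h (i + 1) (by simp; omega)]
    · rfl
  simp only [this]

end Glue

/-! ### The gap inequality on a block with a zero on its right -/

section GapInequality

variable (E : EastPlus)

theorem IsCylinder.integrable {φ : Config → ℝ} (hφ : IsCylinder φ) : Integrable φ E.μ :=
  have := E.μprob
  integrable_of_continuous hφ.continuous _

theorem measureReal_cylinder (S : Finset ℤ) (σ : Config) :
    E.μ.real {ω | ∀ x ∈ S, ω x = σ x} = ∏ x ∈ S, if σ x then E.p else 1 - E.p := by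
  rw [measureReal_def, E.μprod, ENNReal.toReal_prod]
  refine Finset.prod_congr rfl fun x _ => ENNReal.toReal_ofReal ?_
  split_ifs
  · exact E.hp0.le
  · exact sub_nonneg.2 E.hp1.le

theorem measureReal_cylinder_insert {T : Finset ℤ} {x : ℤ} (hx : x ∉ T) (σ : Config) (b : Bool) :
    E.μ.real {ω | ∀ y ∈ insert x T, ω y = Function.update σ x b y} =
      (if b then E.p else 1 - E.p) * E.μ.real {ω | ∀ y ∈ T, ω y = σ y} := by
  rw [measureReal_cylinder, measureReal_cylinder, Finset.prod_insert hx, Function.update_self]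
  congr 1
  refine Finset.prod_congr rfl fun y hy => ?_
  rw [Function.update_of_ne (ne_of_mem_of_not_mem hy hx)]

theorem setIntegral_cylinder_eq_add {φ : Config → ℝ} (hφ : IsCylinder φ) {T : Finset ℤ} (σ : Config)
    {x : ℤ} (hx : x ∉ T) :
    ∫ ω in {ω | ∀ y ∈ T, ω y = σ y}, φ ω ∂E.μ =
      ∫ ω in {ω | ∀ y ∈ insert x T, ω y = Function.update σ x true y}, φ ω ∂E.μ +
        ∫ ω in {ω | ∀ y ∈ insert x T, ω y = Function.update σ x false y}, φ ω ∂E.μ := by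
  have hinsert : ∀ b, {ω : Config | ∀ y ∈ insert x T, ω y = Function.update σ x b y} =
      {ω | ∀ y ∈ T, ω y = σ y} ∩ {ω | ω x = b} := fun b => by
    have hne : ∀ y ∈ T, y ≠ x := fun y hy => ne_of_mem_of_not_mem hy hx
    ext ω
    simp +contextual [and_comm, hne]
  have hmeas : MeasurableSet {ω : Config | ω x = true} :=
    measurableSet_eq_fun (measurable_pi_apply x) measurable_const
  have hdiff : ({ω | ∀ y ∈ T, ω y = σ y} \ {ω | ω x = true} : Set Config) =
      {ω | ∀ y ∈ T, ω y = σ y} ∩ {ω | ω x = false} := by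
    ext ω
    simp
  rw [hinsert, hinsert, ← hdiff, integral_inter_add_sdiff hmeas (hφ.integrable E).integrableOn]

theorem setIntegral_glue (f : ConfigP → ℝ) (k : ℕ) (η : ConfigP)
    (T : Finset ℤ) (hT : ∀ x ∈ T, (k : ℤ) < x) (σ : Config) :
    ∫ ω in {ω | ∀ x ∈ T, ω x = σ x}, f (glue k ω η) ∂E.μ =
      E.μ.real {ω | ∀ x ∈ T, ω x = σ x} * blockAvg E.p k f η := by
  induction k generalizing η T σ with
  | zero => simp [glue_zero, blockAvg_zero]
  | succ k ih =>
    push_cast at hT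
    have hk : (k + 1 : ℤ) ∉ T := fun h => (hT _ h).false
    have hhalf : ∀ b, ∫ ω in {ω | ∀ x ∈ insert (k + 1 : ℤ) T, ω x = Function.update σ (k + 1) b x},
        f (glue (k + 1) ω η) ∂E.μ = (if b then E.p else 1 - E.p) *
          E.μ.real {ω | ∀ x ∈ T, ω x = σ x} * blockAvg E.p k f (Function.update η (site k) b) := by
      intro b
      have hS : ∀ x ∈ insert (k + 1 : ℤ) T, (k : ℤ) < x := fun x hx => by
        rcases Finset.mem_insert.1 hx with rfl | hx
        · exact lt_add_one _
        · linarith [hT x hx]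
      have hmeas : MeasurableSet
          {ω : Config | ∀ x ∈ insert (k + 1 : ℤ) T, ω x = Function.update σ (k + 1) b x} := by
        measurability
      rw [← measureReal_cylinder_insert E hk, ← ih _ _ hS]
      refine setIntegral_congr_fun hmeas fun ω hω => ?_
      simp only [glue_succ, hω (k + 1) (Finset.mem_insert_self _ _), Function.update_self]
    rw [setIntegral_cylinder_eq_add E (isCylinder_comp_glue f (k + 1) η) σ hk, hhalf, hhalf,
      blockAvg_succ, siteAvg_apply]
    simp only [if_true, Bool.false_eq_true, if_false]
    ring

theorem integral_glue (f : ConfigP → ℝ) (k : ℕ) (η : ConfigP) :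
    ∫ ω, f (glue k ω η) ∂E.μ = blockAvg E.p k f η := by
  have := E.μprob
  simpa using setIntegral_glue E f k η ∅ (by simp) fun _ => true

theorem variance_glue (f : ConfigP → ℝ) (k : ℕ) (η : ConfigP) :
    variance (fun ω => f (glue k ω η)) E.μ =
      blockAvg E.p k (f ^ 2) η - blockAvg E.p k f η ^ 2 := by
  have := E.μprob
  have hcyl := isCylinder_comp_glue f k η
  have hL2 : MemLp (fun ω => f (glue k ω η)) 2 E.μ :=
    hcyl.continuous.memLp_of_hasCompactSupport (HasCompactSupport.of_compactSpace _)
  rw [variance_eq_sub hL2, ← integral_glue, ← integral_glue]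
  rfl

/- On `ℤ` the rate at `site (k - 1)` depends on a random coordinate at `site k`, while `f` must keep
its boundary value `η (site k)` there: hence the block of length `k + 1` and the update of `ξ`. -/
theorem eastGen_glue (p : ℝ) (f : ConfigP → ℝ) (k : ℕ) (η : ConfigP) (ω : Config) :
    eastGen p (fun ω => f (glue k ω η)) ω =
      ∑ i ∈ Finset.range k,
        siteGen p i (fun ξ => f (Function.update ξ (site k) (η (site k)))) (glue (k + 1) ω η) := by
  have hsupp : ∀ x ∉ (Finset.range k).image (fun i : ℕ => (i + 1 : ℤ)),
      (if ω (x + 1) = false then (1 : ℝ) else 0) * (if ω x = false then p else 1 - p) *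
        (f (glue k (flipAt ω x) η) - f (glue k ω η)) = 0 := fun x hx => by
    have : glue k (flipAt ω x) η = glue k ω η := by
      ext y
      obtain ⟨j, rfl⟩ := exists_site_eq y
      by_cases hj : j < k
      · have : (j + 1 : ℤ) ≠ x := fun h => hx (Finset.mem_image.2 ⟨j, Finset.mem_range.2 hj, h⟩)
        simp [glue_site, flipAt, this]
      · simp [glue_site, hj]
    rw [this, sub_self, mul_zero]
  rw [eastGen, tsum_eq_sum hsupp, Finset.sum_image fun i _ j _ h => by simpa using h]
  refine Finset.sum_congr rfl fun i hi => ?_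
  have hik := Finset.mem_range.1 hi
  have hflip : glue (k + 1) (flipAt ω (i + 1)) η = flipAtP (glue (k + 1) ω η) (site i) := by
    ext x
    obtain ⟨j, rfl⟩ := exists_site_eq x
    by_cases hj : j = i <;> simp [glue_site, flipAtP, flipAt, hj, hik.trans k.lt_succ_self]
  simp only [siteGen, rate, ← hflip, update_glue_succ, glue_site, hik.trans k.lt_succ_self,
    Nat.succ_lt_succ hik, if_true]
  push_cast
  rfl

theorem siteEnergy_update_le {p : ℝ} (hp0 : 0 ≤ p) (hp1 : p ≤ 1) {i k : ℕ} (hi : i < k)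
    (f : ConfigP → ℝ) {ξ : ConfigP} (hξ : ξ (site k) = false) (b : Bool) :
    siteEnergy p i (fun ζ => f (Function.update ζ (site k) false))
      (Function.update ξ (site k) b) ≤ siteEnergy p i f ξ := by
  have hrate : rate p i (Function.update ξ (site k) b) ≤ rate p i ξ := by
    have := sub_nonneg.2 hp1
    by_cases hk : i + 1 = k
    · subst hk
      have hne : site i ≠ site (i + 1) := by simp
      simp only [rate, Function.update_self, Function.update_of_ne hne, hξ, if_true]
      gcongr
      split_ifs <;> norm_num
    · simp [rate, hk, hi.ne]
  have hself : Function.update ξ (site k) false = ξ := by rw [← hξ, Function.update_eq_self]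
  have hne : site k ≠ site i := by simp [hi.ne']
  have hflip : Function.update (flipAtP (Function.update ξ (site k) b) (site i)) (site k) false =
      flipAtP ξ (site i) := by
    simp [flipAtP_eq_update, Function.update_of_ne hne.symm, ← Function.update_comm hne, hself]
  simp only [siteEnergy, hflip, Function.update_idem, hself]
  gcongr

theorem gapZ_mul_variance_le (hgap : 0 < gapZ E.p E.μ) {φ : Config → ℝ}
    (hφ : IsCylinder φ) (hvar : 0 < variance φ E.μ) :
    gapZ E.p E.μ * variance φ E.μ ≤ -∫ ω, φ ω * eastGen E.p φ ω ∂E.μ := by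
  rw [← le_div_iff₀ hvar]
  refine csInf_le (by_contra fun h => ?_) ⟨φ, hφ, hvar, rfl⟩
  exact hgap.ne' (Real.sInf_of_not_bddBelow h)

theorem integral_glue_mul_eastGen_glue (f : ConfigP → ℝ) (k : ℕ) (η : ConfigP) :
    ∫ ω, f (glue k ω η) * eastGen E.p (fun ω => f (glue k ω η)) ω ∂E.μ =
      ∑ i ∈ Finset.range k, blockAvg E.p (k + 1)
        ((fun ξ => f (Function.update ξ (site k) (η (site k)))) *
          siteGen E.p i (fun ξ => f (Function.update ξ (site k) (η (site k))))) η := by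
  simp only [← integral_glue]
  rw [← integral_finsetSum _ fun i _ => (isCylinder_comp_glue _ _ _).integrable E]
  simp only [eastGen_glue, Finset.mul_sum, Pi.mul_apply, update_glue_succ]

theorem blockAvg_succ_siteEnergy_update_le {p : ℝ} (hp0 : 0 ≤ p) (hp1 : p ≤ 1) {i k : ℕ}
    (hi : i < k) (f : ConfigP → ℝ) {η : ConfigP} (hη : η (site k) = false) :
    blockAvg p (k + 1) (siteEnergy p i fun ξ => f (Function.update ξ (site k) false)) η ≤
      blockAvg p k (siteEnergy p i f) η := by
  have hle b := blockAvg_le_blockAvg (k := k) (η := η) hp0 hp1 fun ξ hξ =>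
    siteEnergy_update_le hp0 hp1 hi f ((hξ k le_rfl).trans hη) b
  simp only [blockAvg_comp_update le_rfl] at hle
  rw [blockAvg_succ, siteAvg_apply]
  linarith [mul_le_mul_of_nonneg_left (hle true) hp0,
    mul_le_mul_of_nonneg_left (hle false) (sub_nonneg.2 hp1)]

theorem two_mul_gapZ_mul_blockVariance_le (hgap : 0 < gapZ E.p E.μ) (f : ConfigP → ℝ) {k : ℕ}
    {η : ConfigP} (hη : η (site k) = false) :
    2 * (gapZ E.p E.μ * (blockAvg E.p k (f ^ 2) η - blockAvg E.p k f η ^ 2)) ≤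
      ∑ i ∈ Finset.range k, blockAvg E.p k (siteEnergy E.p i f) η := by
  have hp0 := E.hp0.le
  have hp1 := E.hp1.le
  set φ : Config → ℝ := fun ω => f (glue k ω η)
  rw [← variance_glue]
  rcases (variance_nonneg φ E.μ).eq_or_lt with hvar | hvar
  · rw [← hvar, mul_zero, mul_zero]
    exact Finset.sum_nonneg fun i _ => blockAvg_nonneg hp0 hp1 (siteEnergy_nonneg hp0 hp1 i f)
  · set f₀ : ConfigP → ℝ := fun ξ => f (Function.update ξ (site k) false)
    have hform := integral_glue_mul_eastGen_glue E f k η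
    rw [hη] at hform
    calc 2 * (gapZ E.p E.μ * variance φ E.μ)
        ≤ 2 * -∫ ω, φ ω * eastGen E.p φ ω ∂E.μ := by
          gcongr
          exact gapZ_mul_variance_le E hgap (isCylinder_comp_glue f k η) hvar
      _ = ∑ i ∈ Finset.range k, blockAvg E.p (k + 1) (siteEnergy E.p i f₀) η := by
          rw [hform, mul_neg, Finset.mul_sum, ← Finset.sum_neg_distrib]
          refine Finset.sum_congr rfl fun i hi => ?_
          rw [two_mul_blockAvg_mul_siteGen_of_lt ((Finset.mem_range.1 hi).trans k.lt_succ_self),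
            neg_neg]
      _ ≤ ∑ i ∈ Finset.range k, blockAvg E.p k (siteEnergy E.p i f) η :=
          Finset.sum_le_sum fun i hi =>
            blockAvg_succ_siteEnergy_update_le hp0 hp1 (Finset.mem_range.1 hi) f hη

end GapInequality

/-! ### A maximum principle over closed blocks -/

theorem eventually_lt_add_mul_of_deriv_lt {u : ℝ → ℝ} {s d r : ℝ}
    (hd : HasDerivWithinAt u d (Set.Ici s) s) (hr : d < r) :
    ∀ᶠ z in nhdsWithin s (Set.Ioi s), u z < u s + r * (z - s) := by
  filter_upwards [hd.Ioi_of_Ici.limsup_slope_le' (lt_irrefl s) hr,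
    self_mem_nhdsWithin] with z hz hsz
  rw [slope_def_field, div_lt_iff₀ (sub_pos.2 hsz)] at hz
  linarith

theorem le_mul_exp_of_deriv_le_at_max {ι : Type*} [Finite ι] {u u' : ι → ℝ → ℝ} {c M : ℝ}
    (hcont : ∀ i, ContinuousOn (u i) (Set.Ici 0))
    (hderiv : ∀ i t, 0 ≤ t → HasDerivWithinAt (u i) (u' i t) (Set.Ici t) t)
    (hmax : ∀ i t, 0 ≤ t → (∀ j, u j t ≤ u i t) → u' i t ≤ c * u i t)
    (h0 : ∀ i, u i 0 ≤ M) (i : ι) {t : ℝ} (ht : 0 ≤ t) : u i t ≤ M * Real.exp (c * t) := by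
  have := Fintype.ofFinite ι
  have hne : (Finset.univ : Finset ι).Nonempty := ⟨i, Finset.mem_univ i⟩
  set f : ℝ → ℝ := fun s => Finset.univ.sup' hne fun j => u j s
  have hle : ∀ j s, u j s ≤ f s := fun j s =>
    Finset.le_sup' (fun j => u j s) (Finset.mem_univ j)
  have hslope : ∀ s ∈ Set.Ico 0 t, ∀ r, c * f s < r →
      ∃ᶠ z in nhdsWithin s (Set.Ioi s), (z - s)⁻¹ * (f z - f s) < r := by
    intro s hs r hr
    have hall : ∀ᶠ z in nhdsWithin s (Set.Ioi s), ∀ j, u j z < f s + r * (z - s) := by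
      refine eventually_all.2 fun j => ?_
      rcases (hle j s).eq_or_lt with heq | hlt
      · have hjr : u' j s < r :=
          (hmax j s hs.1 fun i => (hle i s).trans heq.ge).trans_lt (by rwa [heq])
        simpa only [heq] using eventually_lt_add_mul_of_deriv_lt (hderiv j s hs.1) hjr
      · have hline : Tendsto (fun z => f s + r * (z - s)) (nhdsWithin s (Set.Ioi s))
            (nhds (f s)) :=
          ((by fun_prop : Continuous fun z => f s + r * (z - s)).tendsto' s _
            (by simp)).mono_left nhdsWithin_le_nhds
        exact (hderiv j s hs.1).Ioi_of_Ici.continuousWithinAt.eventually_lt hline hlt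
    refine Eventually.frequently ?_
    filter_upwards [hall, self_mem_nhdsWithin] with z hz hsz
    have hfz : f z < f s + r * (z - s) := (Finset.sup'_lt_iff hne).2 fun j _ => hz j
    rw [inv_mul_lt_iff₀ (sub_pos.2 hsz)]
    linarith
  have hgronwall := le_gronwallBound_of_liminf_deriv_right_le (K := c) (ε := 0) (δ := M)
    (ContinuousOn.finset_sup'_apply hne fun j _ => (hcont j).mono Set.Icc_subset_Ici_self)
    hslope (Finset.sup'_le hne _ fun j _ => h0 j) (fun s _ => (add_zero _).ge) t ⟨ht, le_rfl⟩
  rw [gronwallBound_ε0, sub_zero] at hgronwall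
  exact (hle i t).trans hgronwall

section Flow

/-- The blocks `{site 0, …, site (k - 1)}`, `1 ≤ k ≤ n`, that are closed on the right by a zero
`η (site k) = false`, together with the configuration `η` surrounding them. -/
def closedBlocks (n : ℕ) : Set (ℕ × ConfigP) :=
  {x | 1 ≤ x.1 ∧ x.1 ≤ n ∧ freeze n x.2 = x.2 ∧ x.2 (site x.1) = false}

theorem finite_closedBlocks (n : ℕ) : (closedBlocks n).Finite :=
  ((Set.finite_Iic n).prod (finite_range_freeze n)).subset fun x hx =>
    ⟨hx.2.1, x.2, hx.2.2.1⟩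

/-- `F` solves on `[0, ∞)` the Kolmogorov equation of the East dynamics on
`site 0, …, site (n - 1)`. -/
structure IsEastFlow (p : ℝ) (n : ℕ) (F : ℝ → ConfigP → ℝ) : Prop where
  continuousOn : ∀ η, ContinuousOn (fun t => F t η) (Set.Ici 0)
  hasDerivWithinAt : ∀ t, 0 ≤ t → ∀ η, HasDerivWithinAt (fun s => F s η)
    (∑ i ∈ Finset.range n, siteGen p i (F t) η) (Set.Ici t) t

theorem siteGen_neg (p : ℝ) (i : ℕ) (f : ConfigP → ℝ) (η : ConfigP) :
    siteGen p i (-f) η = -siteGen p i f η := by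
  simp only [siteGen, Pi.neg_apply]
  ring

theorem IsEastFlow.neg {p : ℝ} {n : ℕ} {F : ℝ → ConfigP → ℝ} (hF : IsEastFlow p n F) :
    IsEastFlow p n (-F) where
  continuousOn η := (hF.continuousOn η).neg
  hasDerivWithinAt t ht η := by
    simp only [Pi.neg_apply, siteGen_neg, Finset.sum_neg_distrib]
    exact (hF.hasDerivWithinAt t ht η).neg

variable {p : ℝ} {n k i : ℕ} {η : ConfigP} {F : ℝ → ConfigP → ℝ} {t : ℝ}

theorem flip_mem_closedBlocks (hx : (k, η) ∈ closedBlocks n) (hki : k < i) (hin : i < n) :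
    (k, flipAtP η (site i)) ∈ closedBlocks n := by
  obtain ⟨hk1, hkn, hfreeze, hzero⟩ := hx
  refine ⟨hk1, hkn, ?_, ?_⟩
  · simp only at hfreeze
    simp only [flipAtP_eq_update, freeze_update hin.le, hfreeze]
  · simpa [flipAtP_eq_update, hki.ne] using hzero

theorem siteGen_blockAvg_nonpos (hp0 : 0 ≤ p) (hp1 : p ≤ 1) {f : ConfigP → ℝ}
    (hx : (k, η) ∈ closedBlocks n)
    (hmax : ∀ y ∈ closedBlocks n, blockAvg p y.1 f y.2 ≤ blockAvg p k f η)
    (hki : k ≤ i) (hin : i < n) : siteGen p i (blockAvg p k f) η ≤ 0 := by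
  rcases hki.eq_or_lt with rfl | hki
  · obtain ⟨-, -, hfreeze, hzero⟩ := hx
    simp only at hzero
    rcases hsucc : η (site (k + 1)) with _ | _
    · have hle := hmax (k + 1, η) ⟨by simp, hin, hfreeze, hsucc⟩
      have hself : Function.update η (site k) false = η := by rw [← hzero, Function.update_eq_self]
      simp only [blockAvg_succ, siteAvg_apply, hself] at hle
      simp only [siteGen, rate, hsucc, hzero, flipAtP_eq_update, Bool.not_false, if_true, one_mul]
      linarith
    · simp [siteGen, rate, hsucc]
  · exact mul_nonpos_of_nonneg_of_nonpos (rate_nonneg hp0 hp1 i η)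
      (sub_nonpos.2 (hmax _ (flip_mem_closedBlocks hx hki hin)))

theorem IsEastFlow.blockAvg_le (hp0 : 0 ≤ p) (hp1 : p ≤ 1) (hF : IsEastFlow p n F) {M : ℝ}
    (h0 : ∀ x ∈ closedBlocks n, blockAvg p x.1 (F 0) x.2 ≤ M) (ht : 0 ≤ t) {x : ℕ × ConfigP}
    (hx : x ∈ closedBlocks n) : blockAvg p x.1 (F t) x.2 ≤ M := by
  have := (finite_closedBlocks n).to_subtype
  have h := le_mul_exp_of_deriv_le_at_max (ι := closedBlocks n) (c := 0) (M := M)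
    (u := fun x t => blockAvg p x.1.1 (F t) x.1.2)
    (fun x => continuousOn_blockAvg hF.continuousOn x.1.1 x.1.2)
    (fun x t ht => hasDerivWithinAt_blockAvg (hF.hasDerivWithinAt t ht) x.1.1 x.1.2)
    (fun ⟨⟨k, η⟩, hx⟩ t _ hmax => ?_) (fun x => h0 x.1 x.2) ⟨x, hx⟩ ht
  · simpa using h
  · have hterm : ∀ i ∈ Finset.range n, blockAvg p k (siteGen p i (F t)) η ≤ 0 := fun i hi => by
      rcases lt_or_ge i k with hik | hki
      · rw [blockAvg_siteGen_of_lt hik, Pi.zero_apply]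
      · rw [blockAvg_siteGen_of_le hki]
        exact siteGen_blockAvg_nonpos hp0 hp1 hx (fun y hy => hmax ⟨y, hy⟩) hki
          (Finset.mem_range.1 hi)
    simpa only [zero_mul, ← Finset.sum_fn, map_sum, Finset.sum_apply] using Finset.sum_nonpos hterm

theorem IsEastFlow.blockAvg_eq_zero (hp0 : 0 ≤ p) (hp1 : p ≤ 1) (hF : IsEastFlow p n F)
    (h0 : ∀ x ∈ closedBlocks n, blockAvg p x.1 (F 0) x.2 = 0) (ht : 0 ≤ t) {x : ℕ × ConfigP}
    (hx : x ∈ closedBlocks n) : blockAvg p x.1 (F t) x.2 = 0 := by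
  refine (hF.blockAvg_le hp0 hp1 (fun x hx => (h0 x hx).le) ht hx).antisymm ?_
  simpa using hF.neg.blockAvg_le (M := 0) hp0 hp1 (fun x hx => by simp [h0 x hx]) ht hx

theorem two_mul_sum_blockAvg_mul_siteGen_le (E : EastPlus) (hgap : 0 < gapZ E.p E.μ)
    {f : ConfigP → ℝ} (hx : (k, η) ∈ closedBlocks n) (hmean : blockAvg E.p k f η = 0)
    (hmax : ∀ y ∈ closedBlocks n, blockAvg E.p y.1 (f ^ 2) y.2 ≤ blockAvg E.p k (f ^ 2) η) :
    ∑ i ∈ Finset.range n, 2 * blockAvg E.p k (f * siteGen E.p i f) η ≤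
      -2 * gapZ E.p E.μ * blockAvg E.p k (f ^ 2) η := by
  have hp0 := E.hp0.le
  have hp1 := E.hp1.le
  obtain ⟨-, hkn, -, hzero⟩ := id hx
  have hinside : ∑ i ∈ Finset.range k, 2 * blockAvg E.p k (f * siteGen E.p i f) η ≤
      -2 * gapZ E.p E.μ * blockAvg E.p k (f ^ 2) η := by
    rw [Finset.sum_congr rfl fun i hi =>
      two_mul_blockAvg_mul_siteGen_of_lt (Finset.mem_range.1 hi) f η, Finset.sum_neg_distrib]
    have hgap_block := two_mul_gapZ_mul_blockVariance_le E hgap f hzero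
    rw [hmean] at hgap_block
    linarith
  have houtside : ∑ i ∈ Finset.Ico k n, 2 * blockAvg E.p k (f * siteGen E.p i f) η ≤ 0 :=
    Finset.sum_nonpos fun i hi =>
      have ⟨hki, hin⟩ := Finset.mem_Ico.1 hi
      (two_mul_blockAvg_mul_siteGen_le hp0 hp1 hki f η).trans
        (siteGen_blockAvg_nonpos hp0 hp1 hx hmax hki hin)
  rw [← Finset.sum_range_add_sum_Ico _ hkn]
  linarith

theorem IsEastFlow.blockAvg_sq_le (E : EastPlus) (hgap : 0 < gapZ E.p E.μ)
    (hF : IsEastFlow E.p n F) {M : ℝ} (h0 : ∀ x ∈ closedBlocks n, blockAvg E.p x.1 (F 0) x.2 = 0)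
    (h0' : ∀ x ∈ closedBlocks n, blockAvg E.p x.1 (F 0 ^ 2) x.2 ≤ M) (ht : 0 ≤ t) {x : ℕ × ConfigP}
    (hx : x ∈ closedBlocks n) :
    blockAvg E.p x.1 (F t ^ 2) x.2 ≤ M * Real.exp (-2 * gapZ E.p E.μ * t) := by
  have := (finite_closedBlocks n).to_subtype
  have hderiv : ∀ t, 0 ≤ t → ∀ η, HasDerivWithinAt (fun s => (F s ^ 2) η)
      ((∑ i ∈ Finset.range n, (2 : ℝ) • (F t * siteGen E.p i (F t))) η) (Set.Ici t) t :=
    fun t ht η => by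
      refine ((hF.hasDerivWithinAt t ht η).pow 2).congr_deriv ?_
      simp only [Finset.sum_apply, Pi.smul_apply, Pi.mul_apply, smul_eq_mul, Finset.mul_sum]
      exact Finset.sum_congr rfl fun i _ => by push_cast; ring
  refine le_mul_exp_of_deriv_le_at_max (ι := closedBlocks n)
    (u := fun x t => blockAvg E.p x.1.1 (F t ^ 2) x.1.2)
    (fun x => continuousOn_blockAvg (fun η => (hF.continuousOn η).pow 2) x.1.1 x.1.2)
    (fun x t ht => hasDerivWithinAt_blockAvg (hderiv t ht) x.1.1 x.1.2)
    (fun ⟨⟨k, η⟩, hx⟩ t ht hmax => ?_) (fun x => h0' x.1 x.2) ⟨x, hx⟩ ht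
  simpa only [map_sum, map_smul, Finset.sum_apply, Pi.smul_apply, smul_eq_mul] using
    two_mul_sum_blockAvg_mul_siteGen_le E hgap hx
      (hF.blockAvg_eq_zero E.hp0.le E.hp1.le h0 ht hx) fun y hy => hmax ⟨y, hy⟩

end Flow

/-! ### Relaxation -/

theorem abs_integral_sub_integral_le_of_continuous {X : Type*} [TopologicalSpace X]
    [TopologicalSpace.PseudoMetrizableSpace X] [MeasurableSpace X] [BorelSpace X]
    {μ ν : Measure X} [IsFiniteMeasure μ] [IsFiniteMeasure ν] {B D : ℝ}
    (h : ∀ g : X → ℝ, Continuous g → (∀ x, |g x| ≤ B) → |∫ x, g x ∂μ - ∫ x, g x ∂ν| ≤ D)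
    {f : X → ℝ} (hf : Measurable f) (hB : ∀ x, |f x| ≤ B) :
    |∫ x, f x ∂μ - ∫ x, f x ∂ν| ≤ D := by
  rcases isEmpty_or_nonempty X with hX | ⟨⟨x₀⟩⟩
  · exact h f (continuous_of_discreteTopology) hB
  have hBB : -B ≤ B := neg_le_self ((abs_nonneg _).trans (hB x₀))
  have hint : ∀ (ρ : Measure X) [IsFiniteMeasure ρ], Integrable f ρ := fun ρ _ =>
    Integrable.of_bound hf.aestronglyMeasurable B (ae_of_all _ hB)
  refine le_of_forall_pos_le_add fun ε hε => ?_
  obtain ⟨g, hg, hgint⟩ := (hint (μ + ν)).exists_boundedContinuous_integral_sub_le hε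
  set c : X → ℝ := fun x => Set.projIcc (-B) B hBB (g x) with hc
  have hccont : Continuous c :=
    continuous_subtype_val.comp (continuous_projIcc.comp g.continuous)
  have hcB : ∀ x, |c x| ≤ B := fun x => abs_le.2 (Set.projIcc (-B) B hBB (g x)).2
  have hcint : ∀ (ρ : Measure X) [IsFiniteMeasure ρ], Integrable c ρ := fun ρ _ =>
    Integrable.of_bound hccont.aestronglyMeasurable B (ae_of_all _ hcB)
  have hcf : ∀ x, |f x - c x| ≤ |f x - g x| := fun x => by
    have hfx := Set.projIcc_of_mem hBB (abs_le.1 (hB x))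
    simpa [hc, hfx] using Set.abs_projIcc_sub_projIcc hBB (c := f x) (d := g x)
  have habs : ∀ (ρ : Measure X) [IsFiniteMeasure ρ],
      |∫ x, f x ∂ρ - ∫ x, c x ∂ρ| ≤ ∫ x, |f x - c x| ∂ρ := fun ρ _ => by
    rw [← integral_sub (hint ρ) (hcint ρ)]
    exact abs_integral_le_integral_abs
  have hdiff : ∀ (ρ : Measure X) [IsFiniteMeasure ρ], Integrable (fun x => |f x - c x|) ρ :=
    fun ρ _ => ((hint ρ).sub (hcint ρ)).abs
  have hclose : ∫ x, |f x - c x| ∂μ + ∫ x, |f x - c x| ∂ν ≤ ε := by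
    rw [← integral_add_measure (hdiff μ) (hdiff ν)]
    exact (integral_mono (hdiff _) ((hint _).sub hgint).abs hcf).trans hg
  linarith [habs μ, abs_sub_comm (∫ x, f x ∂ν) (∫ x, c x ∂ν), habs ν, h c hccont hcB,
    abs_sub_le (∫ x, f x ∂μ) (∫ x, c x ∂μ) (∫ x, f x ∂ν),
    abs_sub_le (∫ x, c x ∂μ) (∫ x, c x ∂ν) (∫ x, f x ∂ν)]

section Resample

variable {p : ℝ} {μ : Measure ConfigP} {f : ConfigP → ℝ} {B : ℝ}

/-- The law of a configuration with law `μ` after its coordinate at site `1` has been resampled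
from Bernoulli(`p`). -/
def resample (p : ℝ) (μ : Measure ConfigP) : Measure ConfigP :=
  p.toNNReal • μ.map (fun η => Function.update η onePos true) +
    (1 - p).toNNReal • μ.map (fun η => Function.update η onePos false)

instance [IsFiniteMeasure μ] : IsFiniteMeasure (resample p μ) := by
  unfold resample
  infer_instance

theorem integral_resample [IsFiniteMeasure μ] (hp0 : 0 ≤ p) (hp1 : p ≤ 1) (hf : Measurable f)
    (hB : ∀ η, |f η| ≤ B) : ∫ η, f η ∂(resample p μ) = ∫ η, avg1P p f η ∂μ := by
  have hint : ∀ (ρ : Measure ConfigP) [IsFiniteMeasure ρ], Integrable f ρ := fun ρ _ =>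
    Integrable.of_bound hf.aestronglyMeasurable B (ae_of_all _ hB)
  have hmeas b : Measurable fun η : ConfigP => Function.update η onePos b :=
    measurable_update_left
  have hupdate b : Integrable (fun η => f (Function.update η onePos b)) μ :=
    (hint (μ.map fun η => Function.update η onePos b)).comp_measurable (hmeas b)
  rw [resample, integral_add_measure (hint _) (hint _), integral_smul_nnreal_measure,
    integral_smul_nnreal_measure, integral_map (hmeas true).aemeasurable hf.aestronglyMeasurable,
    integral_map (hmeas false).aemeasurable hf.aestronglyMeasurable,
    NNReal.smul_def, NNReal.smul_def, Real.coe_toNNReal _ hp0,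
    Real.coe_toNNReal _ (sub_nonneg.2 hp1), smul_eq_mul, smul_eq_mul, ← integral_const_mul,
    ← integral_const_mul,
    ← integral_add ((hupdate true).const_mul _) ((hupdate false).const_mul _)]
  rfl

end Resample

section Avg1P

variable {p : ℝ} {f : ConfigP → ℝ}

theorem continuous_avg1P (hf : Continuous f) : Continuous (avg1P p f) := by
  have hupdate b : Continuous fun η : ConfigP => f (Function.update η onePos b) :=
    hf.comp (continuous_id.update onePos continuous_const)
  exact ((hupdate true).const_mul p).add ((hupdate false).const_mul (1 - p))

theorem abs_avg1P_le (hp0 : 0 ≤ p) (hp1 : p ≤ 1) {B : ℝ} (hB : ∀ η, |f η| ≤ B) (η : ConfigP) :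
    |avg1P p f η| ≤ B := by
  have htrue := mul_le_mul_of_nonneg_left (hB (Function.update η onePos true)) hp0
  have hfalse := mul_le_mul_of_nonneg_left (hB (Function.update η onePos false)) (sub_nonneg.2 hp1)
  calc |avg1P p f η| ≤ |p * f (Function.update η onePos true)| +
        |(1 - p) * f (Function.update η onePos false)| := abs_add_le _ _
    _ ≤ B := by
      rw [abs_mul, abs_mul, abs_of_nonneg hp0, abs_of_nonneg (sub_nonneg.2 hp1)]
      linarith

theorem avg1P_sub_avg1P (p : ℝ) (f : ConfigP → ℝ) : avg1P p (f - avg1P p f) = 0 := by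
  ext η
  simp only [avg1P, Pi.sub_apply, Function.update_idem, Pi.zero_apply]
  ring

end Avg1P

theorem abs_le_sqrt_two_mul_of_pow_mul_sq_le {m a D : ℝ} {k : ℕ} (hm0 : 0 < m)
    (hm2 : 2 * m ≤ 1) (hD : 0 ≤ D) (h : m ^ k * a ^ 2 ≤ (2 * D) ^ 2) :
    |a| ≤ Real.sqrt 2 * D * (1 / m) ^ (k + 1) := by
  refine abs_le_of_sq_le_sq ?_ (by positivity)
  calc a ^ 2 = (1 / m) ^ (k + 1) * (m * (m ^ k * a ^ 2)) := by
        rw [← mul_assoc m, ← pow_succ', ← mul_assoc, ← mul_pow, one_div_mul_cancel hm0.ne',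
          one_pow, one_mul]
    _ ≤ (1 / m) ^ (k + 1) * (m * (2 * D) ^ 2) := by gcongr
    _ = (1 / m) ^ (k + 1) * (2 * m * (2 * D ^ 2)) := by ring
    _ ≤ (1 / m) ^ (k + 1) * (1 * (2 * D ^ 2)) := by gcongr
    _ ≤ ((1 / m) ^ (k + 1)) ^ 2 * (1 * (2 * D ^ 2)) := by
        gcongr
        exact le_self_pow₀ (one_le_pow₀ ((one_le_div₀ hm0).2 (by linarith))) two_ne_zero
    _ = (Real.sqrt 2 * D * (1 / m) ^ (k + 1)) ^ 2 := by
        rw [mul_pow, mul_pow, Real.sq_sqrt zero_le_two]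
        ring

section Relaxation

variable (E : EastPlus) {g : ConfigP → ℝ} {n k : ℕ} {ω : ConfigP} {t C : ℝ}

theorem isEastFlow_integral_freeze (hg : Continuous g) (n : ℕ) :
    IsEastFlow E.p n fun t η => ∫ ξ, g ξ ∂(E.Pp t (freeze n η)) where
  continuousOn η := (E.timeCont g hg (freeze n η)).continuousOn
  hasDerivWithinAt _ ht η := E.hasDerivWithinAt_integral_freeze hg ht η

theorem integral_Pp_zero (hg : Continuous g) (η : ConfigP) : ∫ ξ, g ξ ∂(E.Pp 0 η) = g η :=
  FellerSemigroup.op_zero (P := E.fellerSemigroup) hg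

theorem min_pow_mul_sq_integral_freeze_le (hgap : 0 < gapZ E.p E.μ) (hg : Continuous g)
    (hmean : avg1P E.p g = 0) (hC : ∀ η, |g η| ≤ C) (hk : 1 ≤ k) (hkn : k ≤ n)
    (hω : ω (site k) = false) (ht : 0 ≤ t) :
    min E.p (1 - E.p) ^ k * (∫ η, g η ∂(E.Pp t (freeze n ω))) ^ 2 ≤
      C ^ 2 * Real.exp (-2 * gapZ E.p E.μ * t) := by
  have hp0 := E.hp0.le
  have hp1 := E.hp1.le
  set F : ℝ → ConfigP → ℝ := fun t η => ∫ ξ, g ξ ∂(E.Pp t (freeze n η)) with hFdef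
  have hF : IsEastFlow E.p n F := isEastFlow_integral_freeze E hg n
  have hF0 : F 0 = fun η => g (freeze n η) := funext fun η => integral_Pp_zero E hg _
  have hF0sq : ∀ η, (F 0 ^ 2) η ≤ C ^ 2 := fun η => by
    rw [hF0]
    exact sq_le_sq.2 ((hC _).trans (le_abs_self C))
  have hmean0 : blockAvg E.p 1 (F 0) = 0 := by
    ext η
    have hη := congrFun hmean (freeze n η)
    simp only [avg1P, show onePos = site 0 from rfl, ← freeze_update n.zero_le] at hη
    rw [hF0, blockAvg_one]
    exact hη
  have hblock : (k, freeze n ω) ∈ closedBlocks n :=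
    ⟨hk, hkn, freeze_freeze n ω, (freeze_site n k ω).trans ((if_pos hkn).trans hω)⟩
  calc min E.p (1 - E.p) ^ k * F t ω ^ 2
      = min E.p (1 - E.p) ^ k * (F t ^ 2) (freeze n ω) := by
        simp only [hFdef, Pi.pow_apply, freeze_freeze]
    _ ≤ blockAvg E.p k (F t ^ 2) (freeze n ω) :=
        min_pow_mul_le_blockAvg hp0 hp1 (fun η => sq_nonneg (F t η)) k (freeze n ω)
    _ ≤ C ^ 2 * Real.exp (-2 * gapZ E.p E.μ * t) :=
        hF.blockAvg_sq_le E hgap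
          (fun x hx => congrFun (blockAvg_eq_zero_of_le hx.1 hmean0) x.2)
          (fun x _ => blockAvg_le_of_forall_le hp0 hp1 hF0sq x.1 x.2) ht hblock

theorem min_pow_mul_sq_integral_le (hgap : 0 < gapZ E.p E.μ) (hg : Continuous g)
    (hmean : avg1P E.p g = 0) (hC : ∀ η, |g η| ≤ C) (hk : 1 ≤ k) (hω : ω (site k) = false)
    (ht : 0 ≤ t) :
    min E.p (1 - E.p) ^ k * (∫ η, g η ∂(E.Pp t ω)) ^ 2 ≤
      C ^ 2 * Real.exp (-2 * gapZ E.p E.μ * t) := by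
  have hlim : Tendsto (fun n => ∫ η, g η ∂(E.Pp t (freeze n ω))) atTop
      (nhds (∫ η, g η ∂(E.Pp t ω))) :=
    ((E.feller t ht g hg).tendsto ω).comp (tendsto_freeze ω)
  refine le_of_tendsto ((hlim.pow 2).const_mul _) ?_
  filter_upwards [eventually_ge_atTop k] with n hkn
  exact min_pow_mul_sq_integral_freeze_le E hgap hg hmean hC hk hkn hω ht

theorem relaxation_of_continuous (hgap : 0 < gapZ E.p E.μ) {f : ConfigP → ℝ} (hf : Continuous f)
    {B : ℝ} (hB : ∀ η, |f η| ≤ B) (hk : 1 ≤ k) (hω : ω (site k) = false) (ht : 0 ≤ t) :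
    |∫ η, f η ∂(E.Pp t ω) - ∫ η, avg1P E.p f η ∂(E.Pp t ω)| ≤
      Real.sqrt 2 * B * (1 / min E.p (1 - E.p)) ^ (k + 1) *
        Real.exp (-t * gapZ E.p E.μ) := by
  have := E.markov t
  have hB0 : 0 ≤ B := (abs_nonneg _).trans (hB ω)
  have hcavg : Continuous (avg1P E.p f) := continuous_avg1P hf
  have hdiff : ∀ η, |(f - avg1P E.p f) η| ≤ 2 * B := fun η => by
    rw [Pi.sub_apply]
    linarith [abs_sub (f η) (avg1P E.p f η), hB η, abs_avg1P_le E.hp0.le E.hp1.le hB η]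
  have hsq := min_pow_mul_sq_integral_le E hgap (hf.sub hcavg) (avg1P_sub_avg1P E.p f) hdiff hk
    hω ht
  have hexp : (2 * B) ^ 2 * Real.exp (-2 * gapZ E.p E.μ * t) =
      (2 * (B * Real.exp (-t * gapZ E.p E.μ))) ^ 2 := by
    rw [← mul_assoc, mul_pow _ (Real.exp _), ← Real.exp_nat_mul]
    congr 2
    push_cast
    ring
  rw [hexp] at hsq
  rw [← integral_sub (integrable_of_continuous hf _) (integrable_of_continuous hcavg _)]
  refine (abs_le_sqrt_two_mul_of_pow_mul_sq_le (lt_min E.hp0 (sub_pos.2 E.hp1)) ?_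
    (by positivity) hsq).trans_eq (by ring)
  linarith [min_le_left E.p (1 - E.p), min_le_right E.p (1 - E.p)]

end Relaxation

/-- **Relaxation to equilibrium on the left of a distinguished zero**
(Proposition 4.3 of the paper): if `ω ∈ {0,1}^{ℕ*}` has `ω_z = 0` for some `z > 1` and
`f` is a bounded measurable function on `{0,1}^{ℕ*}`, then for every `t ≥ 0`,
`|P_t⁺ f(ω) − P_t⁺(μ_{{1}}(f))(ω)| ≤ √2 ‖f‖_∞ (1/(p ∧ q))^z e^{-t gap}`. -/
theorem relaxation_left_of_zero (E : EastPlus) (hgap : 0 < gapZ E.p E.μ)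
    (ω : ConfigP) (z : PosNat) (hz : 1 < z.1) (hz0 : ω z = false)
    (f : ConfigP → ℝ) (hf : Measurable f) (B : ℝ) (hB : ∀ η, |f η| ≤ B)
    (t : ℝ) (ht : 0 ≤ t) :
    |(∫ η, f η ∂(E.Pp t ω)) - ∫ η, avg1P E.p f η ∂(E.Pp t ω)| ≤
      Real.sqrt 2 * B * (1 / min E.p (1 - E.p)) ^ z.1 * Real.exp (-t * gapZ E.p E.μ) := by
  have := E.markov t
  obtain ⟨k, rfl⟩ := exists_site_eq z
  have hk : 1 ≤ k := Nat.lt_succ_iff.1 hz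
  rw [← integral_resample E.hp0.le E.hp1.le hf hB]
  refine abs_integral_sub_integral_le_of_continuous (fun g hg hgB => ?_) hf hB
  rw [integral_resample E.hp0.le E.hp1.le hg.measurable hgB]
  exact relaxation_of_continuous E hgap hg hgB hk hz0 ht

end
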